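/- Let K = ℚ(√−d) for d ∈ {1, 2, 3, 7, 11, 19, 43, 67, 163}, with ring of integers O_K, and let u ∈ O_K^× be a unit. If 125 + 4u is a square in K, then u = −1 (in which case 125 + 4u = 121 = 11²). -/

import Mathlib

/-!
The norm form of an imaginary quadratic order is positive definite. Hence a unit `u` has norm `1`
and, evaluating the norm at `u ± 1`, an integral trace `t` with `|t| ≤ 2`. If `125 + 4u` is a
square, so is its norm `15641 + 500 t`, which leaves `t = ±2`, that is `u = ±1`. Finally,
`125 + 4 = 129` is not a square, since a nonnegative integer can only be a square in an imaginary
quadratic order if it already is one in `ℤ`.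
-/

open NumberField

section QuadraticExtension

variable {R S : Type*} [CommRing R] [CommRing S] [Algebra R S]

section Nontrivial

variable [Nontrivial R] [Algebra.IsQuadraticExtension R S]

lemma norm_algebraMap_add_smul (a b : R) (x : S) :
    Algebra.norm R (algebraMap R S a + b • x) =
      a ^ 2 + a * b * Algebra.trace R S x + b ^ 2 * Algebra.norm R x := by
  let B := Module.finBasisOfFinrankEq R S (Algebra.IsQuadraticExtension.finrank_eq_two R S)
  rw [Algebra.norm_eq_matrix_det B, Algebra.norm_eq_matrix_det B, Algebra.trace_eq_matrix_trace B,
    map_add, map_smul, AlgHom.commutes, Matrix.trace_fin_two, Matrix.det_fin_two,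
    Matrix.det_fin_two]
  simp only [Matrix.add_apply, Matrix.algebraMap_matrix_apply, ↓reduceIte, Algebra.algebraMap_self,
    RingHom.id_apply, Matrix.smul_apply, smul_eq_mul, zero_ne_one, zero_add, one_ne_zero]
  ring

lemma trace_sq_eq_sub_two_mul_norm (x : S) :
    Algebra.trace R S (x ^ 2) = Algebra.trace R S x ^ 2 - 2 * Algebra.norm R x := by
  let B := Module.finBasisOfFinrankEq R S (Algebra.IsQuadraticExtension.finrank_eq_two R S)
  rw [Algebra.norm_eq_matrix_det B, Algebra.trace_eq_matrix_trace B,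
    Algebra.trace_eq_matrix_trace B, map_pow, sq, Matrix.trace_fin_two, Matrix.trace_fin_two,
    Matrix.det_fin_two, Matrix.mul_apply, Matrix.mul_apply, Fin.sum_univ_two, Fin.sum_univ_two]
  ring

end Nontrivial

lemma eq_algebraMap_of_trace_eq_of_norm_eq [IsDomain R] [IsDomain S]
    [Algebra.IsQuadraticExtension R S] {x : S} {a : R}
    (htrace : Algebra.trace R S x = 2 * a) (hnorm : Algebra.norm R x = a ^ 2) :
    x = algebraMap R S a := by
  have h : Algebra.norm R (algebraMap R S (-a) + (1 : R) • x) = 0 := by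
    rw [norm_algebraMap_add_smul, htrace, hnorm]
    ring
  rw [Algebra.norm_eq_zero_iff, one_smul, map_neg, neg_add_eq_zero] at h
  exact h.symm

lemma abs_trace_le_two_of_norm_eq_one [LinearOrder R] [IsStrictOrderedRing R]
    [Algebra.IsQuadraticExtension R S] (hnonneg : ∀ x : S, 0 ≤ Algebra.norm R x) {x : S}
    (hx : Algebra.norm R x = 1) : |Algebra.trace R S x| ≤ 2 := by
  have hadd := hnonneg (algebraMap R S 1 + (1 : R) • x)
  have hsub := hnonneg (algebraMap R S (-1) + (1 : R) • x)
  rw [norm_algebraMap_add_smul, hx] at hadd hsub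
  rw [abs_le]
  constructor <;> linarith

end QuadraticExtension

lemma norm_eq_one_of_isUnit {S : Type*} [CommRing S] {u : S} (hu : IsUnit u)
    (hnonneg : 0 ≤ Algebra.norm ℤ u) : Algebra.norm ℤ u = 1 :=
  (Int.isUnit_iff.mp (hu.map (Algebra.norm ℤ))).resolve_right (by linarith)

section ImaginaryQuadraticOrder

variable {S : Type*} [CommRing S] [Algebra.IsQuadraticExtension ℤ S]

lemma isSquare_of_isSquare_intCast (hnonneg : ∀ x : S, 0 ≤ Algebra.norm ℤ x) {n : ℤ}
    (hn : 0 ≤ n) (hsq : IsSquare (n : S)) : IsSquare n := by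
  obtain ⟨y, hy⟩ := (isSquare_iff_exists_sq _).mp hsq
  have hfinrank := Algebra.IsQuadraticExtension.finrank_eq_two ℤ S
  have hnorm : Algebra.norm ℤ y = n := by
    have h : Algebra.norm ℤ y ^ 2 = n ^ 2 := by
      rw [← map_pow, ← hy, ← eq_intCast (algebraMap ℤ S), Algebra.norm_algebraMap, hfinrank]
    exact (sq_eq_sq₀ (hnonneg y) hn).mp h
  have htrace : Algebra.trace ℤ S y ^ 2 = 2 ^ 2 * n := by
    have h := trace_sq_eq_sub_two_mul_norm (R := ℤ) y
    rw [← hy, ← eq_intCast (algebraMap ℤ S), Algebra.trace_algebraMap, hfinrank, hnorm,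
      two_nsmul] at h
    linarith
  obtain ⟨c, hc⟩ : 2 ∣ Algebra.trace ℤ S y :=
    (Int.pow_dvd_pow_iff two_ne_zero).mp ⟨n, htrace⟩
  exact (isSquare_iff_exists_sq _).mpr ⟨c, by rw [hc] at htrace; linarith⟩

lemma eq_one_or_eq_neg_one_of_isSquare_125_add_four_mul [IsDomain S]
    (hnonneg : ∀ x : S, 0 ≤ Algebra.norm ℤ x) {u : S} (hu : IsUnit u)
    (hsq : IsSquare (125 + 4 * u)) : u = 1 ∨ u = -1 := by
  have hnorm := norm_eq_one_of_isUnit hu (hnonneg u)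
  have hsq_norm : IsSquare (15641 + 500 * Algebra.trace ℤ S u) := by
    have h : Algebra.norm ℤ (125 + 4 * u) = 15641 + 500 * Algebra.trace ℤ S u := by
      have h := norm_algebraMap_add_smul (125 : ℤ) 4 u
      rw [Algebra.smul_def, map_ofNat, map_ofNat, hnorm] at h
      linarith
    exact h ▸ hsq.map (Algebra.norm ℤ)
  have hbound := abs_le.mp (abs_trace_le_two_of_norm_eq_one hnonneg hnorm)
  have htrace : Algebra.trace ℤ S u = 2 * 1 ∨ Algebra.trace ℤ S u = 2 * -1 := by
    generalize Algebra.trace ℤ S u = t at hsq_norm hbound ⊢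
    obtain ⟨hlower, hupper⟩ := hbound
    interval_cases t <;> revert hsq_norm <;> norm_num
  refine htrace.imp (fun h ↦ ?_) (fun h ↦ ?_)
  · simpa using eq_algebraMap_of_trace_eq_of_norm_eq h (by simpa using hnorm)
  · simpa using eq_algebraMap_of_trace_eq_of_norm_eq h (by simpa using hnorm)

lemma eq_neg_one_of_isSquare_125_add_four_mul [IsDomain S]
    (hnonneg : ∀ x : S, 0 ≤ Algebra.norm ℤ x) {u : S} (hu : IsUnit u)
    (hsq : IsSquare (125 + 4 * u)) : u = -1 := by
  refine (eq_one_or_eq_neg_one_of_isSquare_125_add_four_mul hnonneg hu hsq).resolve_left ?_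
  rintro rfl
  have h : IsSquare (129 : ℤ) :=
    isSquare_of_isSquare_intCast hnonneg (by norm_num) (by convert hsq using 1; norm_num)
  norm_num at h

end ImaginaryQuadraticOrder

lemma isSquare_of_isSquare_algebraMap {R A : Type*} [CommRing R] [CommRing A] [Algebra R A]
    [IsIntegrallyClosedIn R A] {x : R} (hx : IsSquare (algebraMap R A x)) : IsSquare x := by
  obtain ⟨y, hy⟩ := (isSquare_iff_exists_sq _).mp hx
  obtain ⟨z, rfl⟩ := IsIntegrallyClosedIn.exists_algebraMap_eq_of_isIntegral_pow (R := R)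
    two_pos (hy ▸ isIntegral_algebraMap)
  rw [← map_pow] at hy
  exact (isSquare_iff_exists_sq _).mpr
    ⟨z, IsIntegralClosure.algebraMap_injective R R A hy⟩

section TotallyComplex

variable {K : Type*} [Field K]

open InfinitePlace in
lemma prod_embeddings_mk_eq_of_isComplex [NumberField K] [DecidableEq (InfinitePlace K)]
    {w : InfinitePlace K} (hw : w.IsComplex) (x : K) :
    ∏ φ : K →+* ℂ with mk φ = w, φ x = (w x ^ 2 : ℝ) := by
  classical
  have hfiber : ({φ | mk φ = w} : Finset (K →+* ℂ)) =
      {w.embedding, ComplexEmbedding.conjugate w.embedding} := by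
    ext φ
    rw [Finset.mem_filter_univ, eq_comm, ← mk_embedding w, mk_eq_iff, mk_embedding]
    simp [eq_comm]
  have hne : w.embedding ≠ ComplexEmbedding.conjugate w.embedding := fun h ↦
    isComplex_iff.mp hw (ComplexEmbedding.isReal_iff.mpr h.symm)
  rw [hfiber, Finset.prod_pair hne, ComplexEmbedding.conjugate_coe_eq, Complex.mul_conj',
    norm_embedding_eq, Complex.ofReal_pow]

lemma norm_nonneg_of_isTotallyComplex [NumberField K] [IsTotallyComplex K] (x : K) :
    0 ≤ Algebra.norm ℚ x := by
  classical
  have h : (Algebra.norm ℚ x : ℂ) = (∏ w : InfinitePlace K, w x ^ 2 : ℝ) := by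
    rw [← eq_ratCast (algebraMap ℚ ℂ), Algebra.norm_eq_prod_embeddings ℚ ℂ x,
      ← (RingHom.equivRatAlgHom K ℂ).prod_comp,
      ← Finset.prod_fiberwise Finset.univ InfinitePlace.mk, Complex.ofReal_prod]
    exact Finset.prod_congr rfl fun w _ ↦
      prod_embeddings_mk_eq_of_isComplex (IsTotallyComplex.isComplex w) x
  have hreal : (Algebra.norm ℚ x : ℝ) = ∏ w : InfinitePlace K, w x ^ 2 := by exact_mod_cast h
  exact_mod_cast hreal ▸ Finset.prod_nonneg fun (w : InfinitePlace K) _ ↦ sq_nonneg (w x)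

lemma isTotallyComplex_of_isSquare_ratCast {q : ℚ} (hq : q < 0)
    (hsq : IsSquare (q : K)) : IsTotallyComplex K where
  isComplex v := by
    rw [← InfinitePlace.not_isReal_iff_isComplex]
    intro hv
    have h : IsSquare (q : ℝ) := by simpa using hsq.map (InfinitePlace.embedding_of_isReal hv)
    exact (Rat.cast_lt_zero.mpr hq).not_ge h.nonneg

end TotallyComplex

theorem square_125_add_4u_implies_u_eq_neg_one_general {K : Type*} [Field K] [NumberField K]
    [IsTotallyComplex K] [Algebra.IsQuadraticExtension ℚ K] (u : (𝓞 K)ˣ)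
    (hsq : IsSquare (125 + 4 * ((u : 𝓞 K) : K))) : (u : 𝓞 K) = -1 := by
  have : Algebra.IsQuadraticExtension ℤ (𝓞 K) :=
    ⟨(RingOfIntegers.rank K).trans (Algebra.IsQuadraticExtension.finrank_eq_two ℚ K)⟩
  have hnonneg (x : 𝓞 K) : 0 ≤ Algebra.norm ℤ x := by
    exact_mod_cast (Algebra.coe_norm_int x).symm ▸ norm_nonneg_of_isTotallyComplex (x : K)
  refine eq_neg_one_of_isSquare_125_add_four_mul hnonneg u.isUnit ?_
  exact isSquare_of_isSquare_algebraMap (A := K) (by rwa [map_add, map_mul, map_ofNat, map_ofNat])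

/-- Let `K = ℚ(√-d)` be one of the nine imaginary quadratic fields of class number one and
let `u` be a unit of `O_K`.  If `125 + 4u` is a square in `K`, then `u = -1`. -/
theorem square_125_add_4u_implies_u_eq_neg_one
    (d : ℕ) (hd : d ∈ ({1, 2, 3, 7, 11, 19, 43, 67, 163} : Finset ℕ))
    (K : Type) [Field K] [NumberField K]
    (s : K) (hs : s ^ 2 = -(d : K)) (hK : Module.finrank ℚ K = 2)
    (u : (𝓞 K)ˣ)
    (hsq : ∃ y : K, y ^ 2 = 125 + 4 * (((u : 𝓞 K) : K))) :
    (u : 𝓞 K) = -1 := by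
  have hd_pos : 0 < d := Nat.pos_of_ne_zero (by rintro rfl; simp at hd)
  have : IsTotallyComplex K := isTotallyComplex_of_isSquare_ratCast (q := -d) (by simpa)
    ((isSquare_iff_exists_sq _).mpr ⟨s, by simp [hs]⟩)
  have : Algebra.IsQuadraticExtension ℚ K := ⟨hK⟩
  exact square_125_add_4u_implies_u_eq_neg_one_general u
    ((isSquare_iff_exists_sq _).mpr (hsq.imp fun _ ↦ Eq.symm))
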